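/- Let G be a simple graph, let π be an almost equitable partition of G with characteristic matrix P_π and quotient Laplacian L_π, and let ρ = {S_1,…,S_m} be a π-regular almost equitable partition of the quotient graph G_π with characteristic matrix P_ρ. Let K̃ = diag(c_1,…,c_m), where c_j is the common cardinality of the cells of π belonging to S_j, let π_ρ be the ρ-merge of π, and set L_{π_ρ} = (P_{π_ρ}^T P_{π_ρ})^{−1} P_{π_ρ}^T L(G) P_{π_ρ}. Then L_π^T P_ρ = P_ρ (K̃ L_{π_ρ} K̃^{−1}). -/

import Mathlib

open Classical Matrix

noncomputable def lap {n : ℕ} (G : SimpleGraph (Fin n)) : Matrix (Fin n) (Fin n) ℝ :=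
  Matrix.of fun i j =>
    (if i = j then ((G.neighborSet i).ncard : ℝ) else 0) - (if G.Adj i j then 1 else 0)

def IsTwin {n : ℕ} (G : SimpleGraph (Fin n)) (u v : Fin n) : Prop :=
  u ≠ v ∧ G.neighborSet u \ {v} = G.neighborSet v \ {u}

def IsEigenvalue {n : ℕ} (M : Matrix (Fin n) (Fin n) ℝ) (μ : ℝ) : Prop :=
  ∃ x : Fin n → ℝ, x ≠ 0 ∧ M.mulVec x = μ • x

def HasSimpleSpectrum {n : ℕ} (M : Matrix (Fin n) (Fin n) ℝ) : Prop :=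
  ∃ μ : Fin n → ℝ, Function.Injective μ ∧ ∀ i, IsEigenvalue M (μ i)

def Controllable {n : ℕ} (M : Matrix (Fin n) (Fin n) ℝ) (b : Fin n → ℝ) : Prop :=
  Submodule.span ℝ (Set.range fun k : Fin n => (M ^ (k : ℕ)).mulVec b) = ⊤

def StronglyUncontrollable {n : ℕ} (G : SimpleGraph (Fin n)) : Prop :=
  G.Connected ∧ HasSimpleSpectrum (lap G) ∧
    ∀ b : Fin n → ℝ, (∀ i, b i = 0 ∨ b i = 1) → ¬ Controllable (lap G) b

def Pmat {n k : ℕ} (c : Fin n → Fin k) : Matrix (Fin n) (Fin k) ℝ :=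
  Matrix.of fun i j => if c i = j then 1 else 0

def IsAEP {n k : ℕ} (G : SimpleGraph (Fin n)) (c : Fin n → Fin k) : Prop :=
  ∀ i j : Fin k, i ≠ j → ∀ x y : Fin n, c x = i → c y = i →
    (G.neighborSet x ∩ {z | c z = j}).ncard = (G.neighborSet y ∩ {z | c z = j}).ncard

noncomputable def quotLap {n k : ℕ} (G : SimpleGraph (Fin n)) (c : Fin n → Fin k) :
    Matrix (Fin k) (Fin k) ℝ :=
  ((Pmat c)ᵀ * Pmat c)⁻¹ * (Pmat c)ᵀ * lap G * Pmat c

def IsQuotAEP {k m : ℕ} (Lq : Matrix (Fin k) (Fin k) ℝ) (r : Fin k → Fin m) : Prop :=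
  ∀ a b : Fin m, a ≠ b → ∀ C C' : Fin k, r C = a → r C' = a →
    ∑ C'' ∈ Finset.univ.filter (fun C'' => r C'' = b), Lq C C'' =
      ∑ C'' ∈ Finset.univ.filter (fun C'' => r C'' = b), Lq C' C''

def IsGraphAut {n : ℕ} (G : SimpleGraph (Fin n)) (σ : Equiv.Perm (Fin n)) : Prop :=
  ∀ x y, G.Adj x y ↔ G.Adj (σ x) (σ y)

def joinOne {n : ℕ} (G : SimpleGraph (Fin n)) : SimpleGraph (Fin (n + 1)) where
  Adj x y := x ≠ y ∧ ((x : ℕ) = n ∨ (y : ℕ) = n ∨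
    ∃ (hx : (x : ℕ) < n) (hy : (y : ℕ) < n), G.Adj ⟨x, hx⟩ ⟨y, hy⟩)
  symm := by
    constructor
    rintro x y ⟨hxy, h⟩
    refine ⟨hxy.symm, ?_⟩
    rcases h with h | h | ⟨hx, hy, h⟩
    exacts [Or.inr (Or.inl h), Or.inl h, Or.inr (Or.inr ⟨hy, hx, h.symm⟩)]
  loopless := ⟨fun x h => h.1 rfl⟩

def joinTwo {n : ℕ} (G : SimpleGraph (Fin n)) : SimpleGraph (Fin (n + 2)) where
  Adj x y := x ≠ y ∧ (((x : ℕ) < n ∧ n ≤ (y : ℕ)) ∨ ((y : ℕ) < n ∧ n ≤ (x : ℕ)) ∨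
    ∃ (hx : (x : ℕ) < n) (hy : (y : ℕ) < n), G.Adj ⟨x, hx⟩ ⟨y, hy⟩)
  symm := by
    constructor
    rintro x y ⟨hxy, h⟩
    refine ⟨hxy.symm, ?_⟩
    rcases h with h | h | ⟨hx, hy, h⟩
    exacts [Or.inr (Or.inl h), Or.inl h, Or.inr (Or.inr ⟨hy, hx, h.symm⟩)]
  loopless := ⟨fun x h => h.1 rfl⟩

def addPendant {n : ℕ} (G : SimpleGraph (Fin n)) (v : Fin n) : SimpleGraph (Fin (n + 1)) where
  Adj x y := ((x : ℕ) = n ∧ (y : ℕ) = (v : ℕ)) ∨ ((y : ℕ) = n ∧ (x : ℕ) = (v : ℕ)) ∨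
    ∃ (hx : (x : ℕ) < n) (hy : (y : ℕ) < n), G.Adj ⟨x, hx⟩ ⟨y, hy⟩
  symm := by
    constructor
    rintro x y (h | h | ⟨hx, hy, h⟩)
    exacts [Or.inr (Or.inl h), Or.inl h, Or.inr (Or.inr ⟨hy, hx, h.symm⟩)]
  loopless := by
    constructor
    intro x h
    have hv := v.isLt
    rcases h with ⟨h1, h2⟩ | ⟨h1, h2⟩ | ⟨hx, hy, h⟩
    · omega
    · omega
    · exact G.loopless.irrefl _ h

theorem Pmat_gram {n k : ℕ} (c : Fin n → Fin k) :
    (Pmat c)ᵀ * Pmat c = Matrix.diagonal (fun j => (({x | c x = j}.ncard : ℕ) : ℝ)) := by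
  ext i j
  rw [Matrix.mul_apply, Matrix.diagonal_apply]
  simp only [Matrix.transpose_apply, Pmat, Matrix.of_apply]
  by_cases h : i = j
  · subst h
    rw [if_pos rfl, Set.ncard_eq_toFinset_card']
    simp [Finset.sum_ite, Finset.filter_filter]
  · rw [if_neg h]
    apply Finset.sum_eq_zero
    intro x _
    by_cases h1 : c x = i
    · have : c x ≠ j := fun h2 => h (h1.symm.trans h2)
      simp [this]
    · simp [h1]

theorem cell_pos {n k : ℕ} (c : Fin n → Fin k) (hc : Function.Surjective c) (j : Fin k) :
    (({x | c x = j}.ncard : ℕ) : ℝ) ≠ 0 := by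
  obtain ⟨x, hx⟩ := hc j
  have : {x | c x = j}.ncard ≠ 0 := Set.ncard_ne_zero_of_mem (a := x) hx
  exact_mod_cast this

theorem gram_unit {n k : ℕ} (c : Fin n → Fin k) (hc : Function.Surjective c) :
    IsUnit ((Pmat c)ᵀ * Pmat c).det := by
  rw [Pmat_gram, Matrix.det_diagonal, isUnit_iff_ne_zero]
  exact Finset.prod_ne_zero_iff.mpr fun j _ => cell_pos c hc j

theorem lap_symm {n : ℕ} (G : SimpleGraph (Fin n)) : (lap G)ᵀ = lap G := by
  ext i j
  simp only [lap, Matrix.transpose_apply, Matrix.of_apply, G.adj_comm j i]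
  by_cases h : i = j
  · subst h; rfl
  · rw [if_neg h, if_neg (Ne.symm h)]

theorem lap_row {n : ℕ} (G : SimpleGraph (Fin n)) : lap G *ᵥ (fun _ => 1) = 0 := by
  ext i
  simp only [lap, Matrix.mulVec, dotProduct, Matrix.of_apply, mul_one, Pi.zero_apply]
  rw [Finset.sum_sub_distrib, Set.ncard_eq_toFinset_card']
  simp [Fintype.card_subtype]

theorem Pmat_one {n k : ℕ} (c : Fin n → Fin k) : Pmat c *ᵥ (fun _ => 1) = fun _ => 1 := by
  ext i
  simp [Pmat, Matrix.mulVec, dotProduct]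

theorem quotLap_row {n k : ℕ} (G : SimpleGraph (Fin n)) (c : Fin n → Fin k) :
    quotLap G c *ᵥ (fun _ => 1) = 0 := by
  rw [quotLap, ← Matrix.mulVec_mulVec, Pmat_one, ← Matrix.mulVec_mulVec, lap_row,
    Matrix.mulVec_zero]

theorem Pmat_comp {n k m : ℕ} (c : Fin n → Fin k) (r : Fin k → Fin m) :
    Pmat (r ∘ c) = Pmat c * Pmat r := by
  ext i j
  simp only [Pmat, Matrix.mul_apply, Matrix.of_apply, Function.comp, ite_mul, one_mul, zero_mul,
    Finset.sum_ite_eq, Finset.mem_univ, if_true]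

theorem mul_Pmat_apply {k m : ℕ} (L : Matrix (Fin k) (Fin k) ℝ) (r : Fin k → Fin m) (C b) :
    (L * Pmat r) C b = ∑ C'' ∈ Finset.univ.filter (fun C'' => r C'' = b), L C C'' := by
  simp [Pmat, Matrix.mul_apply, Finset.sum_filter]

theorem exists_B {k m : ℕ} (L : Matrix (Fin k) (Fin k) ℝ) (hL : L *ᵥ (fun _ => 1) = 0)
    (r : Fin k → Fin m) (hr : Function.Surjective r) (h : IsQuotAEP L r) :
    ∃ B : Matrix (Fin m) (Fin m) ℝ, L * Pmat r = Pmat r * B := by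
  have off : ∀ C C' b, r C = r C' → r C ≠ b → (L * Pmat r) C b = (L * Pmat r) C' b := by
    intro C C' b h1 h2
    rw [mul_Pmat_apply, mul_Pmat_apply]
    exact h (r C) b h2 C C' rfl h1.symm
  have tot : ∀ C, ∑ b, (L * Pmat r) C b = 0 := by
    intro C
    have : (L * Pmat r) *ᵥ (fun _ => 1) = 0 := by
      rw [← Matrix.mulVec_mulVec, Pmat_one, hL]
    have := congrFun this C
    simpa [Matrix.mulVec, dotProduct] using this
  have all : ∀ C C' b, r C = r C' → (L * Pmat r) C b = (L * Pmat r) C' b := by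
    intro C C' b h1
    by_cases h2 : r C = b
    · have e1 := tot C
      have e2 := tot C'
      rw [← Finset.add_sum_erase _ _ (Finset.mem_univ b)] at e1 e2
      have : ∑ x ∈ Finset.univ.erase b, (L * Pmat r) C x
          = ∑ x ∈ Finset.univ.erase b, (L * Pmat r) C' x := by
        apply Finset.sum_congr rfl
        intro x hx
        exact off C C' x h1 (fun h3 => (Finset.ne_of_mem_erase hx) (h3.symm.trans h2))
      linarith
    · exact off C C' b h1 h2
  choose s hs using hr
  refine ⟨Matrix.of fun a b => (L * Pmat r) (s a) b, ?_⟩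
  ext C b
  rw [all C (s (r C)) b (hs _).symm, Matrix.mul_apply (M := Pmat r)]
  simp [Pmat]

theorem stmt13 {n k m : ℕ} (G : SimpleGraph (Fin n))
    (c : Fin n → Fin k) (hcsurj : Function.Surjective c) (hπ : IsAEP G c)
    (r : Fin k → Fin m) (hrsurj : Function.Surjective r)
    (hρ : IsQuotAEP (quotLap G c) r)
    (card : Fin m → ℕ) (hcard : ∀ j : Fin k, {x | c x = j}.ncard = card (r j)) :
    (quotLap G c)ᵀ * Pmat r =
      Pmat r * (Matrix.diagonal (fun j => (card j : ℝ)) * quotLap G (r ∘ c) *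
        (Matrix.diagonal (fun j => (card j : ℝ)))⁻¹) := by
  obtain ⟨B, hB⟩ := exists_B _ (quotLap_row G c) r hrsurj hρ
  have hN := gram_unit c hcsurj
  have hR := gram_unit (r ∘ c) (hrsurj.comp hcsurj)
  have hNK : (Pmat c)ᵀ * Pmat c * Pmat r
      = Pmat r * Matrix.diagonal (fun j => (card j : ℝ)) := by
    rw [Pmat_gram]
    ext i j
    rw [Matrix.diagonal_mul, Matrix.mul_diagonal, hcard]
    simp only [Pmat, Matrix.of_apply]
    by_cases h : r i = j
    · subst h; simp
    · simp [h]
  have hK : IsUnit (Matrix.diagonal (fun j => (card j : ℝ))).det := by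
    rw [Matrix.det_diagonal, isUnit_iff_ne_zero]
    refine Finset.prod_ne_zero_iff.mpr fun j _ => ?_
    obtain ⟨i, rfl⟩ := hrsurj j
    rw [← hcard]
    exact cell_pos c hcsurj i
  have hNt : ((Pmat c)ᵀ * Pmat c)ᵀ = (Pmat c)ᵀ * Pmat c := by
    rw [Matrix.transpose_mul, Matrix.transpose_transpose]
  have hGr : (Pmat (r ∘ c))ᵀ * Pmat (r ∘ c) = (Pmat r)ᵀ * (((Pmat c)ᵀ * Pmat c) * Pmat r) := by
    rw [Pmat_comp, Matrix.transpose_mul]; simp only [Matrix.mul_assoc]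
  have hM : (Pmat c)ᵀ * lap G * Pmat c = ((Pmat c)ᵀ * Pmat c) * quotLap G c := by
    rw [quotLap]
    simp only [Matrix.mul_assoc (((Pmat c)ᵀ * Pmat c)⁻¹)]
    rw [Matrix.mul_nonsing_inv_cancel_left _ _ hN]
  have hQ : quotLap G (r ∘ c) = B := by
    have : (Pmat (r ∘ c))ᵀ * lap G * Pmat (r ∘ c)
        = ((Pmat (r ∘ c))ᵀ * Pmat (r ∘ c)) * B := by
      rw [hGr, Pmat_comp, Matrix.transpose_mul]
      calc _ = (Pmat r)ᵀ * (((Pmat c)ᵀ * lap G * Pmat c) * Pmat r) := by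
            simp only [Matrix.mul_assoc]
        _ = _ := by
            rw [hM, Matrix.mul_assoc _ (quotLap G c), hB]
            simp only [Matrix.mul_assoc]
    rw [quotLap]
    simp only [Matrix.mul_assoc (((Pmat (r ∘ c))ᵀ * Pmat (r ∘ c))⁻¹)]
    rw [this, Matrix.nonsing_inv_mul_cancel_left _ _ hR]
  have hT : (quotLap G c)ᵀ
      = ((Pmat c)ᵀ * lap G * Pmat c) * ((Pmat c)ᵀ * Pmat c)⁻¹ := by
    rw [quotLap]
    simp only [Matrix.mul_assoc (((Pmat c)ᵀ * Pmat c)⁻¹)]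
    rw [Matrix.transpose_mul, Matrix.transpose_nonsing_inv, hNt, Matrix.transpose_mul,
      Matrix.transpose_mul, lap_symm, Matrix.transpose_transpose]
    simp only [Matrix.mul_assoc]
  have hinv : ((Pmat c)ᵀ * Pmat c)⁻¹ * Pmat r
      = Pmat r * (Matrix.diagonal (fun j => (card j : ℝ)))⁻¹ := by
    have h1 : Pmat r = ((Pmat c)ᵀ * Pmat c) * (Pmat r
        * (Matrix.diagonal (fun j => (card j : ℝ)))⁻¹) := by
      rw [← Matrix.mul_assoc, hNK, Matrix.mul_nonsing_inv_cancel_right _ _ hK]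
    conv_lhs => rw [h1]
    rw [Matrix.nonsing_inv_mul_cancel_left _ _ hN]
  rw [hQ, hT, Matrix.mul_assoc, hinv, hM, ← Matrix.mul_assoc, Matrix.mul_assoc _ (quotLap G c), hB,
    ← Matrix.mul_assoc _ (Pmat r) B, hNK]
  simp only [Matrix.mul_assoc]
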